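/- Every positive integer n is an accumulation point of S, i.e., for every ε > 0 there exists s ∈ S with s ≠ n and |s - n| < ε. -/

import Mathlib

open Matrix

structure ResolutionDatum (r : ℕ) where
  M : Matrix (Fin r) (Fin r) ℤ
  p : Fin r → ℕ
  symm : M.IsSymm
  negdef : ∀ x : Fin r → ℝ, x ≠ 0 → x ⬝ᵥ ((M.map (Int.cast : ℤ → ℝ)) *ᵥ x) < 0
  offdiag_nonneg : ∀ i j : Fin r, i ≠ j → 0 ≤ M i j
  diag_le_neg_two : ∀ i : Fin r, p i = 0 → M i i ≤ -2
  connected : (SimpleGraph.fromRel (fun i j : Fin r => 0 < M i j)).Connected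

/-- The vector `c i = 2 p i - 2 - M i i` (the values `K · A_i`). -/
def ResolutionDatum.c {r : ℕ} (D : ResolutionDatum r) : Fin r → ℚ :=
  fun i => 2 * (D.p i : ℚ) - 2 - (D.M i i : ℚ)

/-- `-K² = -cᵀ M⁻¹ c`. -/
noncomputable def ResolutionDatum.negK2 {r : ℕ} (D : ResolutionDatum r) : ℚ :=
  - (D.c ⬝ᵥ ((D.M.map (Int.cast : ℤ → ℚ))⁻¹ *ᵥ D.c))

/-- The set of all values `-K²` of normal surface singularities. -/
def negK2Set : Set ℝ :=
  { x : ℝ | ∃ (r : ℕ) (_ : 0 < r) (D : ResolutionDatum r), x = (D.negK2 : ℝ) }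

/-- A symmetric matrix with nonnegative off-diagonal entries that maps some positive vector to a
negative one is negative definite. -/
theorem dotProduct_mulVec_neg_of_mulVec_neg {K ι : Type*} [Field K] [LinearOrder K]
    [IsStrictOrderedRing K] [Fintype ι] (A : Matrix ι ι K) (hA : A.IsSymm)
    (hoff : ∀ i j, i ≠ j → 0 ≤ A i j) (y : ι → K) (hy : ∀ i, 0 < y i)
    (hAy : ∀ i, (A *ᵥ y) i < 0) (x : ι → K) (hx : x ≠ 0) :
    x ⬝ᵥ (A *ᵥ x) < 0 := by
  obtain ⟨z, rfl⟩ : ∃ z : ι → K, x = fun i => y i * z i :=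
    ⟨fun i => x i / y i, funext fun i => (mul_div_cancel₀ _ (hy i).ne').symm⟩
  have hle : (fun i => y i * z i) ⬝ᵥ (A *ᵥ fun i => y i * z i) ≤
      ∑ i, ∑ j, (A i j * y i * y j * z i ^ 2 / 2 + A i j * y i * y j * z j ^ 2 / 2) := by
    simp only [dotProduct, mulVec, Finset.mul_sum]
    refine Finset.sum_le_sum fun i _ => Finset.sum_le_sum fun j _ => ?_
    rcases eq_or_ne i j with rfl | hij
    · exact le_of_eq (by ring)
    · have : 0 ≤ A i j * y i * y j * (z i - z j) ^ 2 :=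
        mul_nonneg (mul_nonneg (mul_nonneg (hoff i j hij) (hy i).le) (hy j).le) (sq_nonneg _)
      linarith
  have heq : ∑ i, ∑ j, (A i j * y i * y j * z i ^ 2 / 2 + A i j * y i * y j * z j ^ 2 / 2) =
      ∑ i, y i * z i ^ 2 * (A *ᵥ y) i := by
    simp only [Finset.sum_add_distrib]
    rw [Finset.sum_comm (f := fun i j => A i j * y i * y j * z j ^ 2 / 2),
      ← Finset.sum_add_distrib]
    refine Finset.sum_congr rfl fun i _ => ?_
    rw [← Finset.sum_add_distrib, mulVec, dotProduct, Finset.mul_sum]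
    refine Finset.sum_congr rfl fun j _ => ?_
    rw [hA.apply i j]
    ring
  rw [heq] at hle
  refine hle.trans_lt ?_
  obtain ⟨i, hi⟩ := Function.ne_iff.mp hx
  have hzi : z i ≠ 0 := right_ne_zero_of_mul hi
  refine Finset.sum_neg' (fun j _ => ?_) ⟨i, Finset.mem_univ i, ?_⟩
  · exact mul_nonpos_of_nonneg_of_nonpos (mul_nonneg (hy j).le (sq_nonneg _)) (hAy j).le
  · exact mul_neg_of_pos_of_neg (mul_pos (hy i) (by positivity)) (hAy i)

/-- The intersection matrix of a chain of `r` curves with self-intersections `-b i`. -/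
def chainMatrix (r : ℕ) (b : ℕ → ℤ) : Matrix (Fin r) (Fin r) ℤ :=
  Matrix.of fun i j =>
    (if (j : ℕ) + 1 = i then 1 else 0) + (if (j : ℕ) = i + 1 then 1 else 0) -
      (if (j : ℕ) = i then b i else 0)

theorem chainMatrix_apply_self (r : ℕ) (b : ℕ → ℤ) (i : Fin r) :
    chainMatrix r b i i = -b i := by
  simp [chainMatrix]

theorem chainMatrix_isSymm (r : ℕ) (b : ℕ → ℤ) : (chainMatrix r b).IsSymm := by
  ext i j
  simp only [chainMatrix, transpose_apply, of_apply]
  rcases eq_or_ne i j with rfl | hij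
  · rfl
  · have hij' : (i : ℕ) ≠ j := Fin.val_ne_of_ne hij
    split_ifs <;> omega

theorem chainMatrix_nonneg_of_ne (r : ℕ) (b : ℕ → ℤ) (i j : Fin r) (hij : i ≠ j) :
    0 ≤ chainMatrix r b i j := by
  have hij' : (j : ℕ) ≠ i := Fin.val_ne_of_ne hij.symm
  simp only [chainMatrix, of_apply, hij', if_false]
  split_ifs <;> norm_num

theorem chainMatrix_connected (m : ℕ) (b : ℕ → ℤ) :
    (SimpleGraph.fromRel fun i j : Fin (m + 1) => 0 < chainMatrix (m + 1) b i j).Connected := by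
  refine (SimpleGraph.pathGraph_connected m).mono fun i j hij => ?_
  rw [SimpleGraph.fromRel_adj]
  refine ⟨hij.ne, Or.inl ?_⟩
  rw [SimpleGraph.pathGraph_adj] at hij
  simp only [chainMatrix, of_apply]
  split_ifs <;> omega

/-- The chain matrix acts as a second difference operator on sequences vanishing just outside
the chain. -/
theorem chainMatrix_map_mulVec {K : Type*} [Field K] (r : ℕ) (b : ℕ → ℤ) (f : ℕ → K)
    (h0 : f 0 = 0) (hr : f (r + 1) = 0) (i : Fin r) :
    ((chainMatrix r b).map (Int.cast : ℤ → K) *ᵥ fun j => f (j + 1)) i =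
      f i + f (i + 2) - b i * f (i + 1) := by
  have hi := i.isLt
  have hsum : ((chainMatrix r b).map (Int.cast : ℤ → K) *ᵥ fun j => f (j + 1)) i =
      ∑ j ∈ Finset.range r, ((if j + 1 = (i : ℕ) then f (j + 1) else 0) +
        (if j = (i : ℕ) + 1 then f (j + 1) else 0) -
        (if j = (i : ℕ) then b i * f (j + 1) else 0)) := by
    rw [mulVec, dotProduct, Finset.sum_range]
    refine Finset.sum_congr rfl fun j _ => ?_
    simp only [chainMatrix, map_apply, of_apply]
    push_cast
    simp only [sub_mul, add_mul, ite_mul, one_mul, zero_mul]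
  have hleft : ∑ j ∈ Finset.range r, (if j + 1 = (i : ℕ) then f (j + 1) else 0) = f i := by
    rcases hm : (i : ℕ) with _ | m
    · simp [h0]
    · have : m < r := by omega
      simp [this]
  have hright : ∑ j ∈ Finset.range r, (if j = (i : ℕ) + 1 then f (j + 1) else 0) = f (i + 2) := by
    rw [Finset.sum_ite_eq']
    split_ifs with h
    · rfl
    · rw [Finset.mem_range] at h
      rw [show (i : ℕ) + 2 = r + 1 by omega, hr]
  rw [hsum, Finset.sum_sub_distrib, Finset.sum_add_distrib, hleft, hright, Finset.sum_ite_eq',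
    if_pos (Finset.mem_range.mpr hi)]

theorem chainMatrix_negDef {K : Type*} [Field K] [LinearOrder K] [IsStrictOrderedRing K]
    (r : ℕ) (b : ℕ → ℤ) (hb : ∀ i, 2 ≤ b i) (x : Fin r → K) (hx : x ≠ 0) :
    x ⬝ᵥ ((chainMatrix r b).map (Int.cast : ℤ → K) *ᵥ x) < 0 := by
  let f : ℕ → K := fun i => i * (r + 1 - i)
  have hf : ∀ i : Fin r, 0 < f (i + 1) := fun i => by
    have hi : ((i : ℕ) : K) < r := Nat.cast_lt.mpr i.isLt
    have h : (0 : K) < r + 1 - ((i : ℕ) + 1 : ℕ) := by push_cast; linarith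
    exact mul_pos (Nat.cast_pos.mpr i.val.succ_pos) h
  refine dotProduct_mulVec_neg_of_mulVec_neg _ ((chainMatrix_isSymm r b).map _)
    (fun i j hij => ?_) (fun j => f (j + 1)) hf (fun i => ?_) x hx
  · exact Int.cast_nonneg (chainMatrix_nonneg_of_ne r b i j hij)
  · rw [chainMatrix_map_mulVec r b f (by simp [f]) (by simp [f])]
    have hbi : (2 : K) ≤ b i := by exact_mod_cast hb i
    have hmul := mul_le_mul_of_nonneg_right hbi (hf i).le
    have hdiff : f i + f (i + 2) - 2 * f (i + 1) = -2 := by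
      simp only [f]
      push_cast
      ring
    linarith

/-- A chain of rational curves with self-intersections at most `-2`. -/
def chainDatum (m : ℕ) (b : ℕ → ℤ) (hb : ∀ i, 2 ≤ b i) : ResolutionDatum (m + 1) where
  M := chainMatrix (m + 1) b
  p := 0
  symm := chainMatrix_isSymm _ b
  negdef := chainMatrix_negDef _ b hb
  offdiag_nonneg := chainMatrix_nonneg_of_ne _ b
  diag_le_neg_two i _ := by
    rw [chainMatrix_apply_self]
    linarith [hb i]
  connected := chainMatrix_connected m b

/-- If `M x = -c`, then `-K² = cᵀ x`. -/
theorem chainDatum_negK2_eq (m : ℕ) (b : ℕ → ℤ) (hb : ∀ i, 2 ≤ b i) (x : Fin (m + 1) → ℚ)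
    (hx : (chainMatrix (m + 1) b).map (Int.cast : ℤ → ℚ) *ᵥ x = -(chainDatum m b hb).c) :
    (chainDatum m b hb).negK2 = (chainDatum m b hb).c ⬝ᵥ x := by
  have hdet : IsUnit ((chainMatrix (m + 1) b).map (Int.cast : ℤ → ℚ)).det := by
    rw [isUnit_iff_ne_zero]
    intro h
    obtain ⟨v, hv, hv0⟩ := exists_mulVec_eq_zero_iff.mpr h
    have := chainMatrix_negDef (m + 1) b hb v hv
    rw [hv0, dotProduct_zero] at this
    exact this.false
  have hinv : ((chainMatrix (m + 1) b).map (Int.cast : ℤ → ℚ))⁻¹ *ᵥ (chainDatum m b hb).c =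
      -x := by
    rw [← neg_eq_iff_eq_neg.mpr hx, mulVec_neg, mulVec_mulVec, nonsing_inv_mul _ hdet,
      one_mulVec]
  change -((chainDatum m b hb).c ⬝ᵥ
    (((chainMatrix (m + 1) b).map (Int.cast : ℤ → ℚ))⁻¹ *ᵥ (chainDatum m b hb).c)) = _
  rw [hinv, dotProduct_neg, neg_neg]

/-- The value of `-K²` for a `-(n + 2)`-curve with a chain of `k` curves of self-intersection `-2`
attached on each side. -/
theorem exists_negK2_eq (n k : ℕ) :
    ∃ D : ResolutionDatum (2 * k + 1), D.negK2 = n ^ 2 * (k + 1) / (n * (k + 1) + 2) := by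
  let b : ℕ → ℤ := fun i => if i = k then n + 2 else 2
  have hb : ∀ i, 2 ≤ b i := fun i => by
    simp only [b]
    split_ifs <;> omega
  refine ⟨chainDatum (2 * k) b hb, ?_⟩
  have hden : (n * (k + 1) + 2 : ℚ) ≠ 0 := by positivity
  have hc : ∀ i, (chainDatum (2 * k) b hb).c i = if (i : ℕ) = k then (n : ℚ) else 0 := by
    intro i
    simp only [ResolutionDatum.c, chainDatum, chainMatrix_apply_self, b]
    split_ifs <;> simp
  let f : ℕ → ℚ := fun i =>
    n / (n * (k + 1) + 2) * (if i ≤ k + 1 then (i : ℚ) else 2 * k + 2 - i)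
  rw [chainDatum_negK2_eq _ b hb (fun i => f (i + 1))]
  · have hk : k < 2 * k + 1 := by omega
    rw [dotProduct, Finset.sum_eq_single (⟨k, hk⟩ : Fin (2 * k + 1))]
    · simp only [hc, f, if_true, le_refl]
      push_cast
      ring
    · intro i _ hi
      rw [hc, if_neg (fun h => hi (Fin.ext h)), zero_mul]
    · simp
  · ext i
    have hlast : f (2 * k + 1 + 1) = 0 := by
      simp only [f]
      rw [if_neg (by omega)]
      push_cast
      ring
    rw [chainMatrix_map_mulVec _ b f (by simp [f]) hlast, Pi.neg_apply, hc]
    simp only [f, b]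
    rcases lt_trichotomy (i : ℕ) k with h | h | h
    · rw [if_pos (by omega : (i : ℕ) ≤ k + 1), if_pos (by omega : (i : ℕ) + 2 ≤ k + 1),
        if_pos (by omega : (i : ℕ) + 1 ≤ k + 1), if_neg h.ne, if_neg h.ne]
      push_cast
      ring
    · rw [if_pos (by omega : (i : ℕ) ≤ k + 1), if_neg (by omega : ¬ (i : ℕ) + 2 ≤ k + 1),
        if_pos (by omega : (i : ℕ) + 1 ≤ k + 1), if_pos h, if_pos h, h]
      push_cast
      field_simp
      ring
    · rw [if_neg (by omega : ¬ (i : ℕ) + 2 ≤ k + 1), if_neg (by omega : ¬ (i : ℕ) + 1 ≤ k + 1),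
        if_neg h.ne', if_neg h.ne']
      have hi : (if (i : ℕ) ≤ k + 1 then ((i : ℕ) : ℚ) else 2 * k + 2 - (i : ℕ)) =
          2 * k + 2 - (i : ℕ) := by
        split_ifs with h'
        · have : (i : ℕ) = k + 1 := by omega
          rw [this]
          push_cast
          ring
        · rfl
      rw [hi]
      push_cast
      ring

/-- **Corollary 2.6.** Every positive integer is an accumulation point of the set of values
`-K²` of normal surface singularities. -/
theorem negK2Set_accumulation_pos_int (n : ℕ) (hn : 0 < n) :
    ∀ ε : ℝ, 0 < ε → ∃ s ∈ negK2Set, s ≠ (n : ℝ) ∧ |s - (n : ℝ)| < ε := by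
  intro ε hε
  obtain ⟨k, hk⟩ := exists_nat_gt (2 / ε)
  obtain ⟨D, hD⟩ := exists_negK2_eq n k
  have hn' : (0 : ℝ) < n := Nat.cast_pos.mpr hn
  have hden : (0 : ℝ) < n * (k + 1) + 2 := by positivity
  have hdiff : (D.negK2 : ℝ) - n = -(2 * n / (n * (k + 1) + 2)) := by
    rw [hD]
    push_cast
    field_simp
    ring
  have hpos : (0 : ℝ) < 2 * n / (n * (k + 1) + 2) := by positivity
  refine ⟨D.negK2, ⟨_, Nat.succ_pos _, D, rfl⟩, fun h => ?_, ?_⟩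
  · rw [h, sub_self] at hdiff
    linarith
  · rw [hdiff, abs_neg, abs_of_pos hpos, div_lt_iff₀ hden]
    rw [div_lt_iff₀ hε] at hk
    nlinarith [mul_lt_mul_of_pos_left hk hn', mul_pos hn' hε]
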